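/- (Lower bound on the LAFTE under bounded response) Under Independence, Relevance, Monotonicity, the Double exclusion restriction, and the bounded response condition that for all d1,d2 ∈ {0,1} the potential outcome satisfies Ymin ≤ Y(d1,d2) ≤ Ymax almost surely (for real constants Ymin ≤ Ymax), it holds that [ΔE[(1−D1−D2+2·D1·D2)·Y|Z] + Ymin·ΔE[D∨−D2|Z] − Ymax·ΔE[D∧−D2|Z]] / ΔE[D1|Z] ≤ E[Y(1,1)−Y(0,0) | C], where C := {C1,C2} ∪ {C1,N2} ∪ {C1,A2} satisfies μ(C) = ΔE[D1|Z] > 0. (Corollary 3, lower bound) -/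

import Mathlib

open MeasureTheory ProbabilityTheory

noncomputable section

variable {Ω : Type*} [MeasurableSpace Ω]

/-- Observed first-part treatment: `D1 = D1(1)·Z + D1(0)·(1−Z)`. -/
def obsD1 (Z : Ω → ℝ) (D1 : Bool → Ω → ℝ) (ω : Ω) : ℝ :=
  D1 true ω * Z ω + D1 false ω * (1 - Z ω)

/-- Observed second-part treatment. -/
def obsD2 (Z : Ω → ℝ) (D1 : Bool → Ω → ℝ) (D2 : Bool → Bool → Ω → ℝ) (ω : Ω) : ℝ :=
  (D2 true true ω * obsD1 Z D1 ω + D2 true false ω * (1 - obsD1 Z D1 ω)) * Z ω +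
  (D2 false true ω * obsD1 Z D1 ω + D2 false false ω * (1 - obsD1 Z D1 ω)) * (1 - Z ω)

/-- Summary treatment `D∧ = D1·D2`. -/
def obsDand (Z : Ω → ℝ) (D1 : Bool → Ω → ℝ) (D2 : Bool → Bool → Ω → ℝ) (ω : Ω) : ℝ :=
  obsD1 Z D1 ω * obsD2 Z D1 D2 ω

/-- Summary treatment `D∨ = D1 + D2 − D1·D2`. -/
def obsDor (Z : Ω → ℝ) (D1 : Bool → Ω → ℝ) (D2 : Bool → Bool → Ω → ℝ) (ω : Ω) : ℝ :=
  obsD1 Z D1 ω + obsD2 Z D1 D2 ω - obsD1 Z D1 ω * obsD2 Z D1 D2 ω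

/-- Observed outcome `Y = Σ_{d1,d2} Y(Z,d1,d2)·1{D1=d1, D2=d2}`, written out using that the
observed treatments and the instrument are {0,1}-valued. The first index of `Yp` is `z`, the
second is `d1`, the third is `d2`. -/
def obsY (Z : Ω → ℝ) (D1 : Bool → Ω → ℝ) (D2 : Bool → Bool → Ω → ℝ)
    (Yp : Bool → Bool → Bool → Ω → ℝ) (ω : Ω) : ℝ :=
  (Yp true true true ω * obsD1 Z D1 ω * obsD2 Z D1 D2 ω +
   Yp true false true ω * (1 - obsD1 Z D1 ω) * obsD2 Z D1 D2 ω +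
   Yp true true false ω * obsD1 Z D1 ω * (1 - obsD2 Z D1 D2 ω) +
   Yp true false false ω * (1 - obsD1 Z D1 ω) * (1 - obsD2 Z D1 D2 ω)) * Z ω +
  (Yp false true true ω * obsD1 Z D1 ω * obsD2 Z D1 D2 ω +
   Yp false false true ω * (1 - obsD1 Z D1 ω) * obsD2 Z D1 D2 ω +
   Yp false true false ω * obsD1 Z D1 ω * (1 - obsD2 Z D1 D2 ω) +
   Yp false false false ω * (1 - obsD1 Z D1 ω) * (1 - obsD2 Z D1 D2 ω)) * (1 - Z ω)

/-- `ΔE[A|Z] := E[A | Z = 1] − E[A | Z = 0]`, expectations under conditional measures. -/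
def dE (μ : Measure Ω) (Z A : Ω → ℝ) : ℝ :=
  (∫ ω, A ω ∂(μ[|Z ⁻¹' {1}])) - (∫ ω, A ω ∂(μ[|Z ⁻¹' {0}]))

/-- The full-complier event `{C1,C2}`. -/
def CCev (D1 : Bool → Ω → ℝ) (D2 : Bool → Bool → Ω → ℝ) : Set Ω :=
  {ω | D1 true ω - D1 false ω = 1 ∧ D2 true true ω - D2 false false ω = 1}

/-- The mover event `{C1,N2}`. -/
def CNev (D1 : Bool → Ω → ℝ) (D2 : Bool → Bool → Ω → ℝ) : Set Ω :=
  {ω | D1 true ω - D1 false ω = 1 ∧ D2 true true ω = 0 ∧ D2 false false ω = 0}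

/-- The mover event `{C1,A2}`. -/
def CAev (D1 : Bool → Ω → ℝ) (D2 : Bool → Bool → Ω → ℝ) : Set Ω :=
  {ω | D1 true ω - D1 false ω = 1 ∧ D2 true true ω = 1 ∧ D2 false false ω = 1}

/-- The mover event `{N1,C2}`. -/
def NCev (D1 : Bool → Ω → ℝ) (D2 : Bool → Bool → Ω → ℝ) : Set Ω :=
  {ω | D1 true ω = 0 ∧ D1 false ω = 0 ∧ D2 true false ω - D2 false false ω = 1}

/-- The mover event `{A1,C2}`. -/
def ACev (D1 : Bool → Ω → ℝ) (D2 : Bool → Bool → Ω → ℝ) : Set Ω :=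
  {ω | D1 true ω = 1 ∧ D1 false ω = 1 ∧ D2 true true ω - D2 false true ω = 1}

/-!
Impute an outcome whose two treatment parts disagree by its least favourable value: `Ymin` at
`(d1, d2) = (1, 0)` and `Ymax` at `(0, 1)`. Since `D∨ - D2 = D1 (1 - D2)` and
`D∧ - D2 = -(1 - D1) D2`, the numerator of the bound is the effect of the instrument on the imputed
outcome. Double exclusion makes this effect vanish wherever the instrument does not move `D1`, and
on the first-treatment compliers the imputed outcome is at most `Y(1,1)` under `Z = 1` and at least
`Y(0,0)` under `Z = 0`.
-/

/-- The potential second treatment `D2(z, D1(z))` under the assignment `z`. -/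
def realizedD2 (D1 : Bool → Ω → ℝ) (D2 : Bool → Bool → Ω → ℝ) (z : Bool) (ω : Ω) : ℝ :=
  D2 z true ω * D1 z ω + D2 z false ω * (1 - D1 z ω)

/-- The potential variables `(D1(z), D2(z, D1(z)), d ↦ Y(z, d, d))` under the assignment `z`; the
outcomes at `d1 ≠ d2` are left out because the weight `1 - D1 - D2 + 2 D1 D2` removes them. -/
def potentialArm (D1 : Bool → Ω → ℝ) (D2 : Bool → Bool → Ω → ℝ) (Yp : Bool → Bool → Bool → Ω → ℝ)
    (z : Bool) (ω : Ω) : ℝ × ℝ × (Bool → ℝ) :=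
  (D1 z ω, realizedD2 D1 D2 z ω, fun d => Yp z d d ω)

/-- The outcome `1{d1 = d2} y d1` of an arm `(d1, d2, y)`, which vanishes where the two treatment
parts `d1, d2 ∈ {0,1}` disagree. -/
def concordantOutcome (v : ℝ × ℝ × (Bool → ℝ)) : ℝ :=
  v.1 * v.2.1 * v.2.2 true + (1 - v.1) * (1 - v.2.1) * v.2.2 false

/-- The concordant outcome of an arm `(d1, d2, y)`, completed by the values least favourable to the
treatment: `ymin` at `(d1, d2) = (1, 0)` and `ymax` at `(0, 1)`. -/
def imputedOutcome (ymin ymax : ℝ) (v : ℝ × ℝ × (Bool → ℝ)) : ℝ :=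
  concordantOutcome v + ymin * (v.1 * (1 - v.2.1)) + ymax * ((1 - v.1) * v.2.1)

/-- The compliers with respect to the first treatment, whatever their second-treatment type. -/
def complierEvent (D1 : Bool → Ω → ℝ) : Set Ω :=
  {ω | D1 true ω - D1 false ω = 1}

theorem imputedOutcome_one_le {ymin ymax d2 : ℝ} {y : Bool → ℝ} (hd2 : d2 ≤ 1)
    (hy : ymin ≤ y true) : imputedOutcome ymin ymax (1, d2, y) ≤ y true := by
  simp only [imputedOutcome, concordantOutcome]
  nlinarith [mul_nonneg (sub_nonneg.2 hd2) (sub_nonneg.2 hy)]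

theorem le_imputedOutcome_zero {ymin ymax d2 : ℝ} {y : Bool → ℝ} (hd2 : 0 ≤ d2)
    (hy : y false ≤ ymax) : y false ≤ imputedOutcome ymin ymax (0, d2, y) := by
  simp only [imputedOutcome, concordantOutcome]
  nlinarith [mul_nonneg hd2 (sub_nonneg.2 hy)]

section Potential

variable {α : Type*} {D1 : Bool → α → ℝ} {D2 : Bool → Bool → α → ℝ} {ω : α}

theorem realizedD2_eq_zero_or_one (hD1 : ∀ b ω, D1 b ω = 0 ∨ D1 b ω = 1)
    (hD2 : ∀ b b' ω, D2 b b' ω = 0 ∨ D2 b b' ω = 1) (z : Bool) (ω : α) :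
    realizedD2 D1 D2 z ω = 0 ∨ realizedD2 D1 D2 z ω = 1 := by
  rcases hD1 z ω with h | h <;> simp [realizedD2, h, hD2]

theorem eq_one_and_eq_zero_of_mem_complierEvent (hD1 : ∀ b ω, D1 b ω = 0 ∨ D1 b ω = 1)
    (hω : ω ∈ complierEvent D1) : D1 true ω = 1 ∧ D1 false ω = 0 := by
  have hdiff : D1 true ω - D1 false ω = 1 := hω
  rcases hD1 true ω with ht | ht <;> rcases hD1 false ω with hf | hf <;>
    constructor <;> linarith

theorem eq_of_notMem_complierEvent (hD1 : ∀ b ω, D1 b ω = 0 ∨ D1 b ω = 1)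
    (hle : D1 false ω ≤ D1 true ω) (hω : ω ∉ complierEvent D1) : D1 true ω = D1 false ω := by
  have hdiff : D1 true ω - D1 false ω ≠ 1 := hω
  rcases hD1 true ω with ht | ht <;> rcases hD1 false ω with hf | hf
  · rw [ht, hf]
  · linarith
  · exact absurd (by linarith) hdiff
  · rw [ht, hf]

end Potential

section Observed

variable {α : Type*} {Z : α → ℝ} {D1 : Bool → α → ℝ} {D2 : Bool → Bool → α → ℝ} {z : Bool} {ω : α}

theorem obsD1_eq_of_instrument_eq (hz : Z ω = bif z then 1 else 0) : obsD1 Z D1 ω = D1 z ω := by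
  cases z <;> simp_all [obsD1]

theorem obsD2_eq_of_instrument_eq (hz : Z ω = bif z then 1 else 0) :
    obsD2 Z D1 D2 ω = realizedD2 D1 D2 z ω := by
  rw [obsD2, obsD1_eq_of_instrument_eq hz]
  cases z <;> simp_all [realizedD2]

theorem obsDor_sub_obsD2 : obsDor Z D1 D2 ω - obsD2 Z D1 D2 ω =
    obsD1 Z D1 ω * (1 - obsD2 Z D1 D2 ω) := by
  rw [obsDor]
  ring

theorem obsDand_sub_obsD2 : obsDand Z D1 D2 ω - obsD2 Z D1 D2 ω =
    -((1 - obsD1 Z D1 ω) * obsD2 Z D1 D2 ω) := by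
  rw [obsDand]
  ring

theorem concordance_weight_mul_obsY {Yp : Bool → Bool → Bool → α → ℝ}
    (hD1 : ∀ b ω, D1 b ω = 0 ∨ D1 b ω = 1) (hD2 : ∀ b b' ω, D2 b b' ω = 0 ∨ D2 b b' ω = 1)
    (hz : Z ω = bif z then 1 else 0) :
    (1 - obsD1 Z D1 ω - obsD2 Z D1 D2 ω + 2 * obsD1 Z D1 ω * obsD2 Z D1 D2 ω) *
        obsY Z D1 D2 Yp ω =
      concordantOutcome (potentialArm D1 D2 Yp z ω) := by
  rw [obsY, obsD1_eq_of_instrument_eq hz, obsD2_eq_of_instrument_eq hz, hz]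
  rcases hD1 z ω with h1 | h1 <;> rcases realizedD2_eq_zero_or_one hD1 hD2 z ω with h2 | h2 <;>
    cases z <;> simp only [concordantOutcome, potentialArm, h1, h2, cond_true, cond_false] <;> ring

end Observed

section Independence

theorem integral_cond_preimage_of_indepFun {𝓧 β E : Type*} [MeasurableSpace 𝓧] [MeasurableSpace β]
    [NormedAddCommGroup E] [NormedSpace ℝ E] {μ : Measure Ω} [IsFiniteMeasure μ] {X : Ω → 𝓧}
    {Z : Ω → β} {f : 𝓧 → E} {s : Set β} (hXZ : IndepFun X Z μ) (hX : AEMeasurable X μ)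
    (hZ : Measurable Z) (hf : AEStronglyMeasurable f (μ.map X)) (hs : MeasurableSet s)
    (hs0 : μ (Z ⁻¹' s) ≠ 0) :
    ∫ ω, f (X ω) ∂(μ[|Z ⁻¹' s]) = ∫ ω, f (X ω) ∂μ := by
  have hset : ∫ ω in Z ⁻¹' s, f (X ω) ∂μ = μ.real (Z ⁻¹' s) • ∫ ω, f (X ω) ∂μ :=
    ((IndepFun_iff_Indep Z X μ).1 hXZ.symm).setIntegral_eq_smul hZ.comap_le hX ⟨s, hs, rfl⟩ hf
  have hne : μ.real (Z ⁻¹' s) ≠ 0 := ENNReal.toReal_ne_zero.2 ⟨hs0, measure_ne_top _ _⟩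
  rw [ProbabilityTheory.cond, integral_smul_measure, hset, ENNReal.toReal_inv]
  exact inv_smul_smul₀ hne _

theorem dE_eq_integral_sub {𝓧 : Type*} [MeasurableSpace 𝓧] {μ : Measure Ω} [IsFiniteMeasure μ]
    {Z A : Ω → ℝ} {X : Bool → Ω → 𝓧} {f : 𝓧 → ℝ} (hZ : Measurable Z)
    (hZ1 : μ (Z ⁻¹' {1}) ≠ 0) (hZ0 : μ (Z ⁻¹' {0}) ≠ 0) (hX : ∀ z, AEMeasurable (X z) μ)
    (hXZ : ∀ z, IndepFun (X z) Z μ) (hf : Measurable f)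
    (hfX : ∀ z, Integrable (fun ω => f (X z ω)) μ)
    (hA : ∀ z ω, Z ω = (bif z then 1 else 0) → A ω = f (X z ω)) :
    dE μ Z A = ∫ ω, (f (X true ω) - f (X false ω)) ∂μ := by
  have harm (z : Bool) (hz : μ (Z ⁻¹' {bif z then 1 else 0}) ≠ 0) :
      ∫ ω, A ω ∂(μ[|Z ⁻¹' {bif z then 1 else 0}]) = ∫ ω, f (X z ω) ∂μ := by
    rw [← integral_cond_preimage_of_indepFun (hXZ z) (hX z) hZ hf.aestronglyMeasurable
      (measurableSet_singleton _) hz]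
    exact integral_congr_ae (ae_cond_of_forall_mem (hZ (measurableSet_singleton _)) (hA z))
  rw [integral_sub (hfX true) (hfX false), ← harm true hZ1, ← harm false hZ0]
  rfl

theorem measure_preimage_zero_ne_zero {μ : Measure Ω} [IsProbabilityMeasure μ] {Z : Ω → ℝ}
    (hZ : Measurable Z) (hZ01 : ∀ ω, Z ω = 0 ∨ Z ω = 1) (hlt : μ (Z ⁻¹' {1}) < 1) :
    μ (Z ⁻¹' {0}) ≠ 0 := by
  have hcompl : Z ⁻¹' {0} = (Z ⁻¹' {1})ᶜ := by
    ext ω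
    rcases hZ01 ω with h | h <;> simp [h]
  rw [hcompl, Ne, prob_compl_eq_zero_iff (hZ (measurableSet_singleton 1))]
  exact hlt.ne

end Independence

section Effects

variable {μ : Measure Ω} {Z : Ω → ℝ} {D1 : Bool → Ω → ℝ} {D2 : Bool → Bool → Ω → ℝ}
  {Yp : Bool → Bool → Bool → Ω → ℝ}

theorem measurableSet_complierEvent (hD1 : ∀ b, Measurable (D1 b)) :
    MeasurableSet (complierEvent D1) :=
  measurableSet_eq_fun ((hD1 true).sub (hD1 false)) measurable_const

theorem complierTypes_ae_eq_complierEvent (hD1 : ∀ b ω, D1 b ω = 0 ∨ D1 b ω = 1)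
    (hD2 : ∀ b b' ω, D2 b b' ω = 0 ∨ D2 b b' ω = 1)
    (hmono : realizedD2 D1 D2 false ≤ᵐ[μ] realizedD2 D1 D2 true) :
    (CCev D1 D2 ∪ CNev D1 D2 ∪ CAev D1 D2 : Set Ω) =ᵐ[μ] complierEvent D1 := by
  filter_upwards [hmono] with ω hle
  refine propext ⟨?_, fun hω => ?_⟩
  · rintro ((h | h) | h) <;> exact h.1
  · obtain ⟨ht, hf⟩ := eq_one_and_eq_zero_of_mem_complierEvent hD1 hω
    have hle' : D2 false false ω ≤ D2 true true ω := by simpa [realizedD2, ht, hf] using hle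
    rcases hD2 true true ω with h | h <;> rcases hD2 false false ω with h' | h'
    · exact .inl (.inr ⟨hω, h, h'⟩)
    · linarith
    · exact .inl (.inl ⟨hω, by linarith⟩)
    · exact .inr ⟨hω, h, h'⟩

theorem mem_unitInterval_of_eq_zero_or_one {x : ℝ} (hx : x = 0 ∨ x = 1) : x ∈ unitInterval := by
  rcases hx with rfl | rfl <;> simp

theorem integrable_mul_of_mem_unitInterval {a f : Ω → ℝ} (hf : Integrable f μ)
    (ha : AEStronglyMeasurable a μ) (ha01 : ∀ ω, a ω ∈ unitInterval) :
    Integrable (fun ω => a ω * f ω) μ :=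
  hf.bdd_mul (c := 1) ha (ae_of_all _ fun ω => by
    rw [Real.norm_of_nonneg (ha01 ω).1]
    exact (ha01 ω).2)

theorem integrable_of_mem_unitInterval [IsFiniteMeasure μ] {a : Ω → ℝ}
    (ha : AEStronglyMeasurable a μ) (ha01 : ∀ ω, a ω ∈ unitInterval) : Integrable a μ := by
  simpa only [mul_one] using integrable_mul_of_mem_unitInterval (integrable_const 1) ha ha01

theorem measurable_realizedD2 (hD1 : ∀ b, Measurable (D1 b)) (hD2 : ∀ b b', Measurable (D2 b b'))
    (z : Bool) : Measurable (realizedD2 D1 D2 z) := by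
  unfold realizedD2
  fun_prop

theorem aemeasurable_potentialArm (hD1 : ∀ b, Measurable (D1 b))
    (hD2 : ∀ b b', Measurable (D2 b b')) (hY : ∀ z d, Integrable (Yp z d d) μ) (z : Bool) :
    AEMeasurable (potentialArm D1 D2 Yp z) μ :=
  (hD1 z).aemeasurable.prodMk ((measurable_realizedD2 hD1 hD2 z).aemeasurable.prodMk
    (aemeasurable_pi_lambda _ fun d => (hY z d).aemeasurable))

theorem indepFun_potentialArm
    (hindep : IndepFun
      (fun ω => ((fun b => D1 b ω), (fun b b' => D2 b b' ω), (fun z d1 d2 => Yp z d1 d2 ω))) Z μ)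
    (z : Bool) : IndepFun (potentialArm D1 D2 Yp z) Z μ :=
  hindep.comp
    (φ := fun v : (Bool → ℝ) × (Bool → Bool → ℝ) × (Bool → Bool → Bool → ℝ) =>
      (v.1 z, v.2.1 z true * v.1 z + v.2.1 z false * (1 - v.1 z), fun d => v.2.2 z d d))
    (by fun_prop) measurable_id

section Arm

variable {v : Ω → ℝ × ℝ × (Bool → ℝ)}

theorem integrable_one_zero_arm [IsFiniteMeasure μ] (hv : AEMeasurable v μ)
    (h1 : ∀ ω, (v ω).1 ∈ unitInterval) (h2 : ∀ ω, (v ω).2.1 ∈ unitInterval) :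
    Integrable (fun ω => (v ω).1 * (1 - (v ω).2.1)) μ :=
  integrable_of_mem_unitInterval (hv.fst.mul (hv.snd.fst.const_sub 1)).aestronglyMeasurable
    fun ω => unitInterval.mul_mem (h1 ω) (Set.Icc.one_sub_mem (h2 ω))

theorem integrable_zero_one_arm [IsFiniteMeasure μ] (hv : AEMeasurable v μ)
    (h1 : ∀ ω, (v ω).1 ∈ unitInterval) (h2 : ∀ ω, (v ω).2.1 ∈ unitInterval) :
    Integrable (fun ω => (1 - (v ω).1) * (v ω).2.1) μ :=
  integrable_of_mem_unitInterval ((hv.fst.const_sub 1).mul hv.snd.fst).aestronglyMeasurable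
    fun ω => unitInterval.mul_mem (Set.Icc.one_sub_mem (h1 ω)) (h2 ω)

theorem integrable_concordantOutcome (hv : AEMeasurable v μ)
    (h1 : ∀ ω, (v ω).1 ∈ unitInterval) (h2 : ∀ ω, (v ω).2.1 ∈ unitInterval)
    (hy : ∀ d, Integrable (fun ω => (v ω).2.2 d) μ) :
    Integrable (fun ω => concordantOutcome (v ω)) μ :=
  .add
    (integrable_mul_of_mem_unitInterval (hy true) (hv.fst.mul hv.snd.fst).aestronglyMeasurable
      fun ω => unitInterval.mul_mem (h1 ω) (h2 ω))
    (integrable_mul_of_mem_unitInterval (hy false)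
      ((hv.fst.const_sub 1).mul (hv.snd.fst.const_sub 1)).aestronglyMeasurable
      fun ω => unitInterval.mul_mem (Set.Icc.one_sub_mem (h1 ω)) (Set.Icc.one_sub_mem (h2 ω)))

theorem integrable_imputedOutcome [IsFiniteMeasure μ] (hv : AEMeasurable v μ)
    (h1 : ∀ ω, (v ω).1 ∈ unitInterval) (h2 : ∀ ω, (v ω).2.1 ∈ unitInterval)
    (hy : ∀ d, Integrable (fun ω => (v ω).2.2 d) μ) (ymin ymax : ℝ) :
    Integrable (fun ω => imputedOutcome ymin ymax (v ω)) μ :=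
  ((integrable_concordantOutcome hv h1 h2 hy).add
    ((integrable_one_zero_arm hv h1 h2).const_mul ymin)).add
    ((integrable_zero_one_arm hv h1 h2).const_mul ymax)

end Arm

theorem measureReal_complierEvent_eq_dE [IsFiniteMeasure μ] (hZ : Measurable Z)
    (hZ1 : μ (Z ⁻¹' {1}) ≠ 0) (hZ0 : μ (Z ⁻¹' {0}) ≠ 0) (hD1 : ∀ b, Measurable (D1 b))
    (hD1I : ∀ b ω, D1 b ω = 0 ∨ D1 b ω = 1) (hindep : ∀ z, IndepFun (D1 z) Z μ)
    (hmono : D1 false ≤ᵐ[μ] D1 true) :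
    μ.real (complierEvent D1) = dE μ Z (obsD1 Z D1) := by
  have hint (z : Bool) : Integrable (D1 z) μ :=
    integrable_of_mem_unitInterval (hD1 z).aestronglyMeasurable
      fun ω => mem_unitInterval_of_eq_zero_or_one (hD1I z ω)
  rw [dE_eq_integral_sub hZ hZ1 hZ0 (fun z => (hD1 z).aemeasurable) hindep measurable_id hint
    fun z ω => obsD1_eq_of_instrument_eq,
    ← integral_indicator_one (measurableSet_complierEvent hD1)]
  refine integral_congr_ae ?_
  filter_upwards [hmono] with ω hle
  by_cases hω : ω ∈ complierEvent D1
  · rw [Set.indicator_of_mem hω]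
    exact hω.symm
  · rw [Set.indicator_of_notMem hω, id, id, eq_of_notMem_complierEvent hD1I hle hω, sub_self]

theorem dE_lowerBound_eq_integral_imputedOutcome [IsFiniteMeasure μ] (hZ : Measurable Z)
    (hZ1 : μ (Z ⁻¹' {1}) ≠ 0) (hZ0 : μ (Z ⁻¹' {0}) ≠ 0) (hD1 : ∀ b, Measurable (D1 b))
    (hD2 : ∀ b b', Measurable (D2 b b')) (hY : ∀ z d, Integrable (Yp z d d) μ)
    (hD1I : ∀ b ω, D1 b ω = 0 ∨ D1 b ω = 1) (hD2I : ∀ b b' ω, D2 b b' ω = 0 ∨ D2 b b' ω = 1)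
    (hindep : ∀ z, IndepFun (potentialArm D1 D2 Yp z) Z μ) (ymin ymax : ℝ) :
    dE μ Z (fun ω =>
        (1 - obsD1 Z D1 ω - obsD2 Z D1 D2 ω + 2 * obsD1 Z D1 ω * obsD2 Z D1 D2 ω) *
          obsY Z D1 D2 Yp ω) +
        ymin * dE μ Z (fun ω => obsDor Z D1 D2 ω - obsD2 Z D1 D2 ω) -
        ymax * dE μ Z (fun ω => obsDand Z D1 D2 ω - obsD2 Z D1 D2 ω) =
      ∫ ω, (imputedOutcome ymin ymax (potentialArm D1 D2 Yp true ω) -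
        imputedOutcome ymin ymax (potentialArm D1 D2 Yp false ω)) ∂μ := by
  have hv := aemeasurable_potentialArm hD1 hD2 hY
  have h1 (z : Bool) (ω : Ω) := mem_unitInterval_of_eq_zero_or_one (hD1I z ω)
  have h2 (z : Bool) (ω : Ω) :=
    mem_unitInterval_of_eq_zero_or_one (realizedD2_eq_zero_or_one hD1I hD2I z ω)
  have hconc (z : Bool) := integrable_concordantOutcome (hv z) (h1 z) (h2 z) (hY z)
  have hone_zero (z : Bool) := integrable_one_zero_arm (hv z) (h1 z) (h2 z)
  have hzero_one (z : Bool) := (integrable_zero_one_arm (hv z) (h1 z) (h2 z)).neg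
  rw [dE_eq_integral_sub hZ hZ1 hZ0 hv hindep (by unfold concordantOutcome; fun_prop) hconc
      fun z ω => concordance_weight_mul_obsY hD1I hD2I,
    dE_eq_integral_sub hZ hZ1 hZ0 hv hindep (f := fun v => v.1 * (1 - v.2.1)) (by fun_prop)
      hone_zero fun z ω hz => by
        rw [obsDor_sub_obsD2, obsD1_eq_of_instrument_eq hz, obsD2_eq_of_instrument_eq hz]; rfl,
    dE_eq_integral_sub hZ hZ1 hZ0 hv hindep (f := fun v => -((1 - v.1) * v.2.1)) (by fun_prop)
      hzero_one fun z ω hz => by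
        rw [obsDand_sub_obsD2, obsD1_eq_of_instrument_eq hz, obsD2_eq_of_instrument_eq hz]; rfl,
    ← integral_const_mul, ← integral_const_mul, ← integral_add, ← integral_sub]
  · refine integral_congr_ae (ae_of_all _ fun ω => ?_)
    simp only [imputedOutcome]
    ring
  · exact ((hconc true).sub (hconc false)).add
      (((hone_zero true).sub (hone_zero false)).const_mul ymin)
  · exact ((hzero_one true).sub (hzero_one false)).const_mul ymax
  · exact (hconc true).sub (hconc false)
  · exact ((hone_zero true).sub (hone_zero false)).const_mul ymin

theorem imputedOutcome_sub_le_indicator (hD1 : ∀ b ω, D1 b ω = 0 ∨ D1 b ω = 1)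
    (hD2 : ∀ b b' ω, D2 b b' ω = 0 ∨ D2 b b' ω = 1) (hmono : D1 false ≤ᵐ[μ] D1 true)
    (hexcl : ∀ d, Yp true d d =ᵐ[μ] Yp false d d) (hdexcl : ∀ d, D2 true d =ᵐ[μ] D2 false d)
    {ymin ymax : ℝ} (hmin : ∀ᵐ ω ∂μ, ymin ≤ Yp true true true ω)
    (hmax : ∀ᵐ ω ∂μ, Yp true false false ω ≤ ymax) :
    (fun ω => imputedOutcome ymin ymax (potentialArm D1 D2 Yp true ω) -
        imputedOutcome ymin ymax (potentialArm D1 D2 Yp false ω)) ≤ᵐ[μ]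
      (complierEvent D1).indicator fun ω => Yp true true true ω - Yp true false false ω := by
  filter_upwards [hmono, ae_all_iff.2 hexcl, ae_all_iff.2 hdexcl, hmin, hmax] with
    ω hle hy hd hymin hymax
  have hD2I (z : Bool) :=
    mem_unitInterval_of_eq_zero_or_one (realizedD2_eq_zero_or_one hD1 hD2 z ω)
  by_cases hω : ω ∈ complierEvent D1
  · obtain ⟨ht, hf⟩ := eq_one_and_eq_zero_of_mem_complierEvent hD1 hω
    rw [Set.indicator_of_mem hω, potentialArm, potentialArm, ht, hf, hy false]
    exact sub_le_sub (imputedOutcome_one_le (hD2I true).2 hymin)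
      (le_imputedOutcome_zero (y := fun d => Yp false d d ω) (hD2I false).1
        (hy false ▸ hymax))
  · have harm : potentialArm D1 D2 Yp true ω = potentialArm D1 D2 Yp false ω := by
      simp only [potentialArm, realizedD2, eq_of_notMem_complierEvent hD1 hle hω, hy, hd]
    rw [Set.indicator_of_notMem hω, harm, sub_self]

end Effects

theorem stmt_13_general
    (μ : Measure Ω) [IsProbabilityMeasure μ]
    (Z : Ω → ℝ) (D1 : Bool → Ω → ℝ) (D2 : Bool → Bool → Ω → ℝ)
    (Yp : Bool → Bool → Bool → Ω → ℝ)
    (hZmeas : Measurable Z)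
    (hD1meas : ∀ b, Measurable (D1 b))
    (hD2meas : ∀ b b', Measurable (D2 b b'))
    (hYint : ∀ z d, Integrable (Yp z d d) μ)
    (hZ1 : μ (Z ⁻¹' {1}) ≠ 0) (hZ0 : μ (Z ⁻¹' {0}) ≠ 0)
    (hD101 : ∀ b ω, D1 b ω = 0 ∨ D1 b ω = 1)
    (hD201 : ∀ b b' ω, D2 b b' ω = 0 ∨ D2 b b' ω = 1)
    (hindep : ∀ z, IndepFun (potentialArm D1 D2 Yp z) Z μ)
    (hrel : 0 < dE μ Z (obsD1 Z D1))
    (hmono : D1 false ≤ᵐ[μ] D1 true)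
    (hexcl : ∀ d, Yp true d d =ᵐ[μ] Yp false d d)
    (hdexcl : ∀ d, D2 true d =ᵐ[μ] D2 false d)
    (Ymin Ymax : ℝ)
    (hmin : ∀ᵐ ω ∂μ, Ymin ≤ Yp true true true ω)
    (hmax : ∀ᵐ ω ∂μ, Yp true false false ω ≤ Ymax) :
    (μ (complierEvent D1)).toReal = dE μ Z (obsD1 Z D1) ∧
    (dE μ Z (fun ω =>
        (1 - obsD1 Z D1 ω - obsD2 Z D1 D2 ω + 2 * obsD1 Z D1 ω * obsD2 Z D1 D2 ω) *
          obsY Z D1 D2 Yp ω) +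
        Ymin * dE μ Z (fun ω => obsDor Z D1 D2 ω - obsD2 Z D1 D2 ω) -
        Ymax * dE μ Z (fun ω => obsDand Z D1 D2 ω - obsD2 Z D1 D2 ω)) / dE μ Z (obsD1 Z D1) ≤
      (∫ ω in complierEvent D1, (Yp true true true ω - Yp true false false ω) ∂μ) /
        (μ (complierEvent D1)).toReal := by
  have hprob : (μ (complierEvent D1)).toReal = dE μ Z (obsD1 Z D1) :=
    measureReal_complierEvent_eq_dE hZmeas hZ1 hZ0 hD1meas hD101
      (fun z => (hindep z).comp measurable_fst measurable_id) hmono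
  refine ⟨hprob, ?_⟩
  have hC := measurableSet_complierEvent hD1meas
  have himputed (z : Bool) :=
    integrable_imputedOutcome (aemeasurable_potentialArm hD1meas hD2meas hYint z)
      (fun ω => mem_unitInterval_of_eq_zero_or_one (hD101 z ω))
      (fun ω => mem_unitInterval_of_eq_zero_or_one (realizedD2_eq_zero_or_one hD101 hD201 z ω))
      (hYint z) Ymin Ymax
  rw [hprob, dE_lowerBound_eq_integral_imputedOutcome hZmeas hZ1 hZ0 hD1meas hD2meas hYint hD101
    hD201 hindep, ← integral_indicator hC]
  refine div_le_div_of_nonneg_right ?_ hrel.le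
  exact integral_mono_ae ((himputed true).sub (himputed false))
    (((hYint true true).sub (hYint true false)).indicator hC)
    (imputedOutcome_sub_le_indicator hD101 hD201 hmono hexcl hdexcl hmin hmax)

theorem stmt_13
    (μ : Measure Ω) [IsProbabilityMeasure μ]
    (Z : Ω → ℝ) (D1 : Bool → Ω → ℝ) (D2 : Bool → Bool → Ω → ℝ)
    (Yp : Bool → Bool → Bool → Ω → ℝ)
    (hZmeas : Measurable Z)
    (hD1meas : ∀ b, Measurable (D1 b))
    (hD2meas : ∀ b b', Measurable (D2 b b'))
    (hYmeas : ∀ z d1 d2, Measurable (Yp z d1 d2))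
    (hYint : ∀ z d1 d2, Integrable (Yp z d1 d2) μ)
    (hZ01 : ∀ ω, Z ω = 0 ∨ Z ω = 1)
    (hZpos : 0 < μ (Z ⁻¹' {1})) (hZlt : μ (Z ⁻¹' {1}) < 1)
    (hD101 : ∀ b ω, D1 b ω = 0 ∨ D1 b ω = 1)
    (hD201 : ∀ b b' ω, D2 b b' ω = 0 ∨ D2 b b' ω = 1)
    (hindep : IndepFun
      (fun ω => ((fun b => D1 b ω), (fun b b' => D2 b b' ω), (fun z d1 d2 => Yp z d1 d2 ω))) Z μ)
    (hrel1 : 0 < dE μ Z (obsD1 Z D1))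
    (hrel2 : 0 < dE μ Z (obsD2 Z D1 D2))
    (hrelAnd : 0 < dE μ Z (obsDand Z D1 D2))
    (hrelOr : 0 < dE μ Z (obsDor Z D1 D2))
    (hmono1 : ∀ᵐ ω ∂μ, D1 false ω ≤ D1 true ω)
    (hmono2 : ∀ᵐ ω ∂μ,
      D2 false true ω * D1 false ω + D2 false false ω * (1 - D1 false ω) ≤
        D2 true true ω * D1 true ω + D2 true false ω * (1 - D1 true ω))
    (hexcl : ∀ d1 d2, ∀ᵐ ω ∂μ, Yp true d1 d2 ω = Yp false d1 d2 ω)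
    (hdexcl : ∀ d1, ∀ᵐ ω ∂μ, D2 true d1 ω = D2 false d1 ω)
    (Ymin Ymax : ℝ) (hYlohi : Ymin ≤ Ymax)
    (hbound : ∀ z d1 d2, ∀ᵐ ω ∂μ, Ymin ≤ Yp z d1 d2 ω ∧ Yp z d1 d2 ω ≤ Ymax) :
    (μ (CCev D1 D2 ∪ CNev D1 D2 ∪ CAev D1 D2)).toReal = dE μ Z (obsD1 Z D1) ∧
    (dE μ Z (fun ω =>
        (1 - obsD1 Z D1 ω - obsD2 Z D1 D2 ω + 2 * obsD1 Z D1 ω * obsD2 Z D1 D2 ω) *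
          obsY Z D1 D2 Yp ω) +
        Ymin * dE μ Z (fun ω => obsDor Z D1 D2 ω - obsD2 Z D1 D2 ω) -
        Ymax * dE μ Z (fun ω => obsDand Z D1 D2 ω - obsD2 Z D1 D2 ω)) / dE μ Z (obsD1 Z D1) ≤
      (∫ ω in CCev D1 D2 ∪ CNev D1 D2 ∪ CAev D1 D2, (Yp true true true ω - Yp true false false ω) ∂μ) /
        (μ (CCev D1 D2 ∪ CNev D1 D2 ∪ CAev D1 D2)).toReal := by
  have hC := complierTypes_ae_eq_complierEvent hD101 hD201 hmono2
  rw [measure_congr hC, setIntegral_congr_set hC]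
  exact stmt_13_general μ Z D1 D2 Yp hZmeas hD1meas hD2meas (fun z d => hYint z d d) hZpos.ne'
    (measure_preimage_zero_ne_zero hZmeas hZ01 hZlt) hD101 hD201
    (indepFun_potentialArm hindep) hrel1 hmono1 (fun d => hexcl d d) hdexcl Ymin Ymax
    ((hbound true true true).mono fun _ h => h.1)
    ((hbound true false false).mono fun _ h => h.2)
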